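/- arXiv:1007.3436 — 2 statements merged into one kernel-verified Lean document; each statement's English description precedes it below -/
import Mathlib

section
/- For every integer n ≥ 2, ζ(n) = (2^n / ((2^n − 1) · (n − 1)!)) · ∫_0^∞ (ln(coth(x)))^{n−1} dx. -/
open MeasureTheory Real

/-- The hyperbolic cotangent, `coth x = cosh x / sinh x`. -/
noncomputable def coth (x : ℝ) : ℝ := Real.cosh x / Real.sinh x

noncomputable def phiAux (u : ℝ) : ℝ :=
  (1 / 2) * (Real.log (1 + Real.exp (-u)) - Real.log (1 - Real.exp (-u)))

lemma coth_eq_exp (x : ℝ) (hx : 0 < x) :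
    coth x = (1 + Real.exp (-(2 * x))) / (1 - Real.exp (-(2 * x))) := by
  have h1 : Real.exp (-(2 * x)) < 1 := Real.exp_lt_one_iff.mpr (by linarith)
  have h2 : 0 < Real.sinh x := Real.sinh_pos_iff.mpr hx
  have h3 : Real.exp (-(2 * x)) = Real.exp (-x) * Real.exp (-x) := by
    rw [← Real.exp_add]; ring_nf
  have h4 : Real.exp x * Real.exp (-x) = 1 := by
    rw [← Real.exp_add]; simp
  unfold coth
  rw [div_eq_div_iff h2.ne' (by linarith), Real.cosh_eq, Real.sinh_eq, h3]
  linear_combination (-Real.exp (-x)) * h4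

lemma exp_neg_lt (u : ℝ) (hu : 0 < u) : Real.exp (-u) < 1 := Real.exp_lt_one_iff.mpr (by linarith)

lemma phiAux_pos (u : ℝ) (hu : 0 < u) : 0 < phiAux u := by
  have h1 := exp_neg_lt u hu
  have h0 := Real.exp_pos (-u)
  have := Real.log_lt_log (x := 1 - Real.exp (-u)) (y := 1 + Real.exp (-u))
    (by linarith) (by linarith)
  unfold phiAux
  linarith

lemma log_coth_phiAux (u : ℝ) (hu : 0 < u) : Real.log (coth (phiAux u)) = u := by
  have h1 := exp_neg_lt u hu
  have h0 := Real.exp_pos (-u)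
  have h5 : Real.exp (-(2 * phiAux u)) = (1 - Real.exp (-u)) / (1 + Real.exp (-u)) := by
    have : -(2 * phiAux u) = Real.log (1 - Real.exp (-u)) - Real.log (1 + Real.exp (-u)) := by
      unfold phiAux; ring
    rw [this, Real.exp_sub, Real.exp_log (by linarith), Real.exp_log (by linarith)]
  have h6 : coth (phiAux u) = (Real.exp (-u))⁻¹ := by
    rw [coth_eq_exp _ (phiAux_pos u hu), h5]
    have ha : (1 + Real.exp (-u)) ≠ 0 := by positivity
    have e1 : 1 + (1 - Real.exp (-u)) / (1 + Real.exp (-u)) = 2 / (1 + Real.exp (-u)) := by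
      rw [eq_div_iff ha, add_mul, div_mul_cancel₀ _ ha]; ring
    have e2 : 1 - (1 - Real.exp (-u)) / (1 + Real.exp (-u))
        = 2 * Real.exp (-u) / (1 + Real.exp (-u)) := by
      rw [eq_div_iff ha, sub_mul, div_mul_cancel₀ _ ha]; ring
    rw [e1, e2, div_div_div_cancel_right₀ ha, inv_eq_one_div,
      div_eq_div_iff (by positivity) h0.ne']
    ring
  rw [h6, Real.log_inv, Real.log_exp, neg_neg]

lemma phiAux_surj (x : ℝ) (hx : 0 < x) : ∃ u, 0 < u ∧ phiAux u = x := by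
  have h1 := exp_neg_lt (2 * x) (by linarith)
  have h0 := Real.exp_pos (-(2 * x))
  set q := Real.exp (-(2 * x)) with hq
  have hr : 0 < (1 - q) / (1 + q) := div_pos (by linarith) (by linarith)
  have hr1 : (1 - q) / (1 + q) < 1 := by rw [div_lt_one (by linarith)]; linarith
  refine ⟨-Real.log ((1 - q) / (1 + q)), ?_, ?_⟩
  · have := Real.log_neg hr hr1
    linarith
  · unfold phiAux
    rw [neg_neg, Real.exp_log hr]
    have ha : (1 + q) ≠ 0 := by positivity
    have e1 : 1 + (1 - q) / (1 + q) = 2 / (1 + q) := by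
      rw [eq_div_iff ha, add_mul, div_mul_cancel₀ _ ha]; ring
    have e2 : 1 - (1 - q) / (1 + q) = 2 / (1 + q) * q := by
      rw [div_mul_eq_mul_div, eq_div_iff ha, sub_mul, div_mul_cancel₀ _ ha]; ring
    rw [e1, e2, Real.log_mul (by positivity) h0.ne', hq, Real.log_exp]
    ring

lemma phiAux_image : phiAux '' Set.Ioi 0 = Set.Ioi 0 := by
  ext x
  constructor
  · rintro ⟨u, hu, rfl⟩
    exact phiAux_pos u hu
  · intro hx
    obtain ⟨u, hu, h⟩ := phiAux_surj x hx
    exact ⟨u, hu, h⟩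

lemma phiAux_deriv (u : ℝ) (hu : 0 < u) :
    HasDerivAt phiAux (-(Real.exp (-u) / (1 - Real.exp (-u) ^ 2))) u := by
  have h1 := exp_neg_lt u hu
  have h0 := Real.exp_pos (-u)
  have he : HasDerivAt (fun u : ℝ => Real.exp (-u)) (Real.exp (-u) * (-1)) u :=
    (hasDerivAt_neg u).exp
  have ha := (he.const_add 1).log (by positivity)
  have hb := (he.const_sub 1).log (by linarith)
  have := (ha.sub hb).const_mul (1 / 2)
  refine this.congr_deriv ?_
  have n1 : 1 + Real.exp (-u) ≠ 0 := by positivity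
  have n2 : 1 - Real.exp (-u) ≠ 0 := by linarith
  have n3 : 1 - Real.exp (-u) ^ 2 = (1 + Real.exp (-u)) * (1 - Real.exp (-u)) := by ring
  rw [n3]
  field_simp
  ring

lemma integral_subst_aux (m : ℕ) :
    ∫ x in Set.Ioi (0 : ℝ), Real.log (coth x) ^ m =
      ∫ u in Set.Ioi (0 : ℝ), Real.exp (-u) / (1 - Real.exp (-u) ^ 2) * u ^ m := by
  have hinj : Set.InjOn phiAux (Set.Ioi 0) := by
    intro a ha b hb hab
    rw [← log_coth_phiAux a ha, ← log_coth_phiAux b hb, hab]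
  have := integral_image_eq_integral_abs_deriv_smul (s := Set.Ioi (0 : ℝ)) measurableSet_Ioi
    (fun x hx => (phiAux_deriv x hx).hasDerivWithinAt) hinj
    (fun x => Real.log (coth x) ^ m)
  rw [phiAux_image] at this
  rw [this]
  refine setIntegral_congr_fun measurableSet_Ioi fun u hu => ?_
  have h1 := exp_neg_lt u hu
  have h0 := Real.exp_pos (-u)
  have h2 : 0 < 1 - Real.exp (-u) ^ 2 := by nlinarith
  simp only [smul_eq_mul]
  rw [log_coth_phiAux u hu, abs_neg, abs_of_pos (by positivity)]

lemma integral_term_aux (m : ℕ) (b : ℝ) (hb : 0 < b) :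
    ∫ u in Set.Ioi (0 : ℝ), u ^ m * Real.exp (-(b * u)) = (m.factorial : ℝ) * (1 / b ^ (m + 1)) := by
  have := Real.integral_rpow_mul_exp_neg_mul_Ioi (a := (m : ℝ) + 1) (r := b) (by positivity) hb
  simp only [add_sub_cancel_right, Real.rpow_natCast] at this
  rw [this, Real.Gamma_nat_eq_factorial, mul_comm, ← Nat.cast_add_one, Real.rpow_natCast,
    one_div_pow]

lemma integrable_term_aux (m : ℕ) (b : ℝ) (hb : 0 < b) :
    IntegrableOn (fun u : ℝ => u ^ m * Real.exp (-(b * u))) (Set.Ioi 0) := by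
  have h : (0 : ℝ) ≤ m := by positivity
  have := integrableOn_rpow_mul_exp_neg_mul_rpow (p := 1) (s := m) (b := b) (by linarith)
    one_pos hb
  simpa using this

lemma summable_aux (n : ℕ) (hn : 2 ≤ n) : Summable fun k : ℕ => (1 : ℝ) / (k + 1) ^ n := by
  have := (summable_nat_add_iff 1).mpr (Real.summable_one_div_nat_pow.mpr (by omega : 1 < n))
  simpa using this

lemma summable_odd_aux (n : ℕ) (hn : 2 ≤ n) :
    Summable fun k : ℕ => (1 : ℝ) / (2 * k + 1) ^ n := by
  have := (summable_aux n hn).comp_injective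
    (i := fun k : ℕ => 2 * k) (fun a b h => by simpa using h)
  simpa [Function.comp_def] using this

lemma zeta_odd_aux (n : ℕ) (hn : 2 ≤ n) :
    (∑' k : ℕ, (1 : ℝ) / (2 * k + 1) ^ n) + (1 / 2 ^ n) * (∑' k : ℕ, (1 : ℝ) / (k + 1) ^ n)
      = ∑' k : ℕ, (1 : ℝ) / (k + 1) ^ n := by
  have e : ∀ k : ℕ, (1 : ℝ) / (((2 * k + 1 : ℕ) : ℝ) + 1) ^ n
      = (1 / 2 ^ n) * (1 / ((k : ℝ) + 1) ^ n) := by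
    intro k
    rw [one_div_mul_one_div, ← mul_pow]
    push_cast
    ring_nf
  have := tsum_even_add_odd (f := fun k : ℕ => (1 : ℝ) / (k + 1) ^ n)
    (by simpa using summable_odd_aux n hn)
    (by simp only [e]; exact (summable_aux n hn).mul_left _)
  simp only [e] at this
  rw [tsum_mul_left] at this
  simpa using this

lemma integral_eq_aux (m : ℕ) (hm : 1 ≤ m) :
    ∫ u in Set.Ioi (0 : ℝ), Real.exp (-u) / (1 - Real.exp (-u) ^ 2) * u ^ m =
      (m.factorial : ℝ) * ∑' k : ℕ, (1 : ℝ) / (2 * k + 1) ^ (m + 1) := by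
  have hpos : ∀ k : ℕ, (0 : ℝ) < 2 * k + 1 := fun k => by positivity
  have h := hasSum_integral_of_summable_integral_norm (μ := volume.restrict (Set.Ioi (0 : ℝ)))
    (F := fun (k : ℕ) (u : ℝ) => u ^ m * Real.exp (-((2 * k + 1) * u)))
    (fun k => integrable_term_aux m _ (hpos k))
    (by
      refine ((summable_odd_aux (m + 1) (by omega)).mul_left (m.factorial : ℝ)).congr ?_
      intro k
      rw [← integral_term_aux m _ (hpos k)]
      refine setIntegral_congr_fun measurableSet_Ioi fun u hu => ?_
      have hu : 0 < u := hu
      exact (Real.norm_of_nonneg (by positivity)).symm)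
  have h2 := h.tsum_eq
  simp only [integral_term_aux m _ (hpos _)] at h2
  rw [tsum_mul_left] at h2
  rw [h2]
  refine setIntegral_congr_fun measurableSet_Ioi fun u hu => ?_
  have h1 := exp_neg_lt u hu
  have h0 := Real.exp_pos (-u)
  have hg := tsum_geometric_of_lt_one (r := Real.exp (-u) ^ 2) (by positivity) (by nlinarith)
  have e : ∀ k : ℕ, u ^ m * Real.exp (-((2 * k + 1) * u))
      = (u ^ m * Real.exp (-u)) * (Real.exp (-u) ^ 2) ^ k := by
    intro k
    rw [mul_assoc, ← pow_mul, ← Real.exp_nat_mul, ← Real.exp_add]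
    push_cast
    ring_nf
  simp only [e]
  rw [tsum_mul_left, hg]
  ring

theorem zeta_eq_const_mul_integral_log_coth_pow (n : ℕ) (hn : 2 ≤ n) :
    (∑' k : ℕ, (1 : ℝ) / (k + 1) ^ n) =
      2 ^ n / ((2 ^ n - 1) * (Nat.factorial (n - 1) : ℝ)) *
        ∫ x in Set.Ioi (0 : ℝ), Real.log (coth x) ^ (n - 1) := by
  rw [integral_subst_aux, integral_eq_aux (n - 1) (by omega), Nat.sub_add_cancel (by omega)]
  have h := zeta_odd_aux n hn
  set Z := ∑' k : ℕ, (1 : ℝ) / (k + 1) ^ n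
  set O := ∑' k : ℕ, (1 : ℝ) / (2 * k + 1) ^ n
  have h2 : (1 : ℝ) < 2 ^ n := one_lt_pow₀ (by norm_num) (by omega)
  have h3 : (2 : ℝ) ^ n - 1 ≠ 0 := by linarith
  have hf : ((n - 1).factorial : ℝ) ≠ 0 := by positivity
  have hO : O = Z - 1 / 2 ^ n * Z := by linarith
  rw [hO]
  field_simp
end

section
/- The double integral ∫_0^1 ∫_0^1 1/(1 − x²y²) dx dy equals π²/8. -/
open MeasureTheory Real

lemma aux_odd : HasSum (fun n : ℕ => (1 / (2 * (n : ℝ) + 1)) ^ 2) (π ^ 2 / 8) := by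
  have hz := hasSum_zeta_two
  have he : HasSum (fun n : ℕ => (1 : ℝ) / ((2 * n : ℕ) : ℝ) ^ 2) (π ^ 2 / 24) := by
    have h := hz.mul_left (1 / 4)
    have e1 : (fun n : ℕ => (1 : ℝ) / ((2 * n : ℕ) : ℝ) ^ 2)
        = fun n : ℕ => 1 / 4 * (1 / (n : ℝ) ^ 2) := by
      funext n
      push_cast
      rw [mul_pow, one_div, one_div, one_div, mul_inv]
      norm_num
    have e2 : π ^ 2 / 24 = 1 / 4 * (π ^ 2 / 6) := by ring
    rw [e1, e2]
    exact h
  have hs : Summable (fun n : ℕ => (1 : ℝ) / ((2 * n + 1 : ℕ) : ℝ) ^ 2) :=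
    hz.summable.comp_injective (i := fun n : ℕ => 2 * n + 1) (fun a b h => by
      simp only at h; omega)
  have h2 := HasSum.even_add_odd (f := fun n : ℕ => (1 : ℝ) / (n : ℝ) ^ 2) he hs.hasSum
  have h3 := h2.unique hz
  have h4 := hs.hasSum
  have h5 : (∑' n : ℕ, (1 : ℝ) / ((2 * n + 1 : ℕ) : ℝ) ^ 2) = π ^ 2 / 8 := by
    linarith
  rw [h5] at h4
  convert h4 using 1
  funext n
  push_cast
  rw [div_pow, one_pow]

lemma aux_int (n : ℕ) : (∫ x : ℝ in Set.Ioo (0 : ℝ) 1, x ^ (2 * n)) = 1 / (2 * (n : ℝ) + 1) := by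
  rw [← integral_Ioc_eq_integral_Ioo, ← intervalIntegral.integral_of_le zero_le_one, integral_pow]
  simp

lemma aux_int2 (n : ℕ) : (∫ p : ℝ × ℝ in Set.Ioo (0 : ℝ) 1 ×ˢ Set.Ioo (0 : ℝ) 1,
    p.1 ^ (2 * n) * p.2 ^ (2 * n)) = (1 / (2 * (n : ℝ) + 1)) ^ 2 := by
  have h := setIntegral_prod_mul (μ := (volume : Measure ℝ)) (ν := (volume : Measure ℝ))
    (fun x : ℝ => x ^ (2 * n)) (fun x : ℝ => x ^ (2 * n)) (Set.Ioo (0 : ℝ) 1) (Set.Ioo (0 : ℝ) 1)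
  rw [aux_int] at h
  rw [Measure.volume_eq_prod, h, sq]

theorem double_integral_one_sub_sq_eq_pi_sq_div_eight :
    (∫ p : ℝ × ℝ in Set.Ioo (0 : ℝ) 1 ×ˢ Set.Ioo (0 : ℝ) 1,
        (1 - p.1 ^ 2 * p.2 ^ 2)⁻¹) = π ^ 2 / 8 := by
  have hint : ∀ n : ℕ, Integrable (fun p : ℝ × ℝ => p.1 ^ (2 * n) * p.2 ^ (2 * n))
      (volume.restrict (Set.Ioo (0 : ℝ) 1 ×ˢ Set.Ioo (0 : ℝ) 1)) := by
    intro n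
    have hc : Continuous (fun p : ℝ × ℝ => p.1 ^ (2 * n) * p.2 ^ (2 * n)) := by fun_prop
    exact (hc.continuousOn.integrableOn_compact
      ((isCompact_Icc (a := (0 : ℝ)) (b := 1)).prod (isCompact_Icc (a := (0 : ℝ)) (b := 1)))).mono_set
      (Set.prod_mono Set.Ioo_subset_Icc_self Set.Ioo_subset_Icc_self)
  have hnorm : ∀ (n : ℕ) (p : ℝ × ℝ), ‖p.1 ^ (2 * n) * p.2 ^ (2 * n)‖
      = p.1 ^ (2 * n) * p.2 ^ (2 * n) := by
    intro n p
    rw [Real.norm_of_nonneg]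
    rw [pow_mul, pow_mul]
    positivity
  have key := hasSum_integral_of_summable_integral_norm hint (by
    simp only [hnorm, aux_int2]
    exact aux_odd.summable)
  simp only [aux_int2] at key
  rw [← key.unique aux_odd]
  refine setIntegral_congr_fun (measurableSet_Ioo.prod measurableSet_Ioo) ?_
  rintro ⟨x, y⟩ ⟨⟨hx0, hx1⟩, hy0, hy1⟩
  simp only at hx0 hx1 hy0 hy1 ⊢
  have hlt : x ^ 2 * y ^ 2 < 1 := by
    rw [← mul_pow]
    exact pow_lt_one₀ (by positivity) (by nlinarith) two_ne_zero
  rw [← tsum_geometric_of_lt_one (by positivity) hlt]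
  refine tsum_congr fun n => ?_
  rw [mul_pow, pow_mul, pow_mul]
end
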